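/- Let L ≥ 2 be an integer, A ∈ ℝ^{M×N}, y ∈ ℝ^M, and let x₀ ∈ ℝ^N have all entries strictly positive. Suppose x : [0,∞) → ℝ^N is differentiable and satisfies the reduced gradient flow x'(t) = −[Aᵀ(A x(t)^{⊙L} − y)] ⊙ x(t)^{⊙(L−1)} for all t ≥ 0, with x(0) = x₀. Then the limit x̃∞ := lim_{t→∞} x(t)^{⊙L} exists, x̃∞ is entrywise nonnegative, and x̃∞ belongs to S₊, i.e., x̃∞ minimizes ‖Az − y‖₂² over all entrywise-nonnegative z ∈ ℝ^N. -/

import Mathlib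

open Filter Topology Matrix

noncomputable section

/-- The NNLS solution set `S₊ = argmin_{z ≥ 0} ‖Az − y‖₂²`. -/
def nnlsSet {M N : ℕ} (A : Matrix (Fin M) (Fin N) ℝ) (y : Fin M → ℝ) :
    Set (Fin N → ℝ) :=
  {z | (∀ i, 0 ≤ z i) ∧ ∀ w : Fin N → ℝ, (∀ i, 0 ≤ w i) →
    ∑ j, (A.mulVec z j - y j) ^ 2 ≤ ∑ j, (A.mulVec w j - y j) ^ 2}

/-- The reduced gradient flow `x'(t) = −[Aᵀ(A x(t)^{⊙L} − y)] ⊙ x(t)^{⊙(L−1)}` for `t ≥ 0`. -/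
def GradFlow {M N : ℕ} (A : Matrix (Fin M) (Fin N) ℝ) (y : Fin M → ℝ) (L : ℕ)
    (x : ℝ → Fin N → ℝ) : Prop :=
  ∀ t : ℝ, 0 ≤ t → ∀ i : Fin N,
    HasDerivAt (fun s => x s i)
      (-(Matrix.mulVec Aᵀ (A.mulVec (fun j => x t j ^ L) - y) i * x t i ^ (L - 1))) t

def lsq {M N : ℕ} (A : Matrix (Fin M) (Fin N) ℝ) (y : Fin M → ℝ) (w : Fin N → ℝ) : ℝ :=
  ∑ j, (A.mulVec w j - y j) ^ 2

lemma lsq_nonneg {M N : ℕ} (A : Matrix (Fin M) (Fin N) ℝ) (y : Fin M → ℝ) (w : Fin N → ℝ) :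
    0 ≤ lsq A y w := Finset.sum_nonneg fun _ _ => sq_nonneg _

lemma continuous_mulVec_coord {M N : ℕ} (A : Matrix (Fin M) (Fin N) ℝ) (j : Fin M) :
    Continuous (fun w : Fin N → ℝ => A.mulVec w j) := by
  simp only [Matrix.mulVec, dotProduct]
  fun_prop

lemma continuous_lsq {M N : ℕ} (A : Matrix (Fin M) (Fin N) ℝ) (y : Fin M → ℝ) :
    Continuous (lsq A y) := by
  unfold lsq
  exact continuous_finsetSum _ fun j _ => ((continuous_mulVec_coord A j).sub continuous_const).pow 2

lemma le_sum_coord {N : ℕ} (z : Fin N → ℝ) (hz : ∀ i, 0 ≤ z i) (i : Fin N) : z i ≤ ∑ k, z k :=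
  Finset.single_le_sum (fun k _ => hz k) (Finset.mem_univ i)

lemma isBounded_simplex {N : ℕ} (K : ℝ) :
    Bornology.IsBounded {z : Fin N → ℝ | (∀ i, 0 ≤ z i) ∧ ∑ i, z i ≤ K} := by
  refine (Metric.isBounded_Icc (0 : Fin N → ℝ) (fun _ => K)).subset ?_
  rintro z ⟨h1, h2⟩
  exact ⟨fun i => h1 i, fun i => (le_sum_coord z h1 i).trans h2⟩

lemma isClosed_simplex {N : ℕ} (K : ℝ) :
    IsClosed {z : Fin N → ℝ | (∀ i, 0 ≤ z i) ∧ ∑ i, z i ≤ K} := by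
  apply IsClosed.and
  · simp only [Set.ofPred_forall]
    exact isClosed_iInter fun i => isClosed_le continuous_const (continuous_apply i)
  · exact isClosed_le (by fun_prop) continuous_const

/-- Minimizer of the regularized problem. -/
lemma exists_reg {M N : ℕ} (A : Matrix (Fin M) (Fin N) ℝ) (y : Fin M → ℝ) (e : ℝ) (he : 0 < e) :
    ∃ z : Fin N → ℝ, (∀ i, 0 ≤ z i) ∧ ∀ w : Fin N → ℝ, (∀ i, 0 ≤ w i) →
      lsq A y z + e * ∑ i, z i ≤ lsq A y w + e * ∑ i, w i := by
  set K := lsq A y 0 / e with hK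
  have hK0 : 0 ≤ K := div_nonneg (lsq_nonneg _ _ _) he.le
  have hc : IsCompact {z : Fin N → ℝ | (∀ i, 0 ≤ z i) ∧ ∑ i, z i ≤ K} :=
    Metric.isCompact_of_isClosed_isBounded (isClosed_simplex K) (isBounded_simplex K)
  have h0 : (0 : Fin N → ℝ) ∈ {z : Fin N → ℝ | (∀ i, 0 ≤ z i) ∧ ∑ i, z i ≤ K} := by
    simp [hK0]
  have hcont : Continuous (fun z : Fin N → ℝ => lsq A y z + e * ∑ i, z i) :=
    (continuous_lsq A y).add (by fun_prop)
  obtain ⟨z, hz, hmin⟩ := hc.exists_isMinOn ⟨0, h0⟩ hcont.continuousOn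
  refine ⟨z, hz.1, fun w hw => ?_⟩
  by_cases hwK : ∑ i, w i ≤ K
  · exact hmin (a := w) ⟨hw, hwK⟩
  · have h1 := hmin h0
    simp only [Set.mem_ofPred_eq, Pi.zero_apply, Finset.sum_const_zero, mul_zero, add_zero] at h1
    have h2 : lsq A y 0 < e * ∑ i, w i := by
      have := (div_lt_iff₀ he).1 (not_le.1 hwK)
      linarith
    have := lsq_nonneg A y w
    linarith

lemma exists_nnls {M N : ℕ} (A : Matrix (Fin M) (Fin N) ℝ) (y : Fin M → ℝ) :
    ∃ z : Fin N → ℝ, (∀ i, 0 ≤ z i) ∧ ∀ w : Fin N → ℝ, (∀ i, 0 ≤ w i) →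
      lsq A y z ≤ lsq A y w := by
  have hepos : ∀ n : ℕ, (0 : ℝ) < 1 / ((n : ℝ) + 1) := fun n => Nat.one_div_pos_of_nat
  choose z hz hmin using fun n : ℕ => exists_reg A y (1 / ((n : ℝ) + 1)) (hepos n)
  have hlim0 : Tendsto (fun n : ℕ => 1 / ((n : ℝ) + 1)) atTop (𝓝 0) :=
    tendsto_one_div_add_atTop_nhds_zero_nat
  by_cases hb : ∃ C : ℝ, ∃ᶠ n in atTop, ∑ i, z n i ≤ C
  · obtain ⟨C, hC⟩ := hb
    obtain ⟨a, ha, φ, hφ, hlim⟩ := tendsto_subseq_of_frequently_bounded (isBounded_simplex C)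
      (x := z) (hC.mono fun n hn => ⟨hz n, hn⟩)
    rw [(isClosed_simplex C).closure_eq] at ha
    refine ⟨a, ha.1, fun w hw => ?_⟩
    have h1 : Tendsto (fun n => lsq A y (z (φ n))) atTop (𝓝 (lsq A y a)) :=
      ((continuous_lsq A y).tendsto a).comp hlim
    have h2 : Tendsto (fun n => lsq A y w + 1 / ((φ n : ℝ) + 1) * ∑ i, w i) atTop
        (𝓝 (lsq A y w + 0 * ∑ i, w i)) :=
      tendsto_const_nhds.add ((hlim0.comp hφ.tendsto_atTop).mul_const _)
    rw [zero_mul, add_zero] at h2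
    refine le_of_tendsto_of_tendsto' h1 h2 fun n => ?_
    have h3 := hmin (φ n) w hw
    have h4 : 0 ≤ 1 / ((φ n : ℝ) + 1) * ∑ i, z (φ n) i :=
      mul_nonneg (hepos _).le (Finset.sum_nonneg fun i _ => hz _ i)
    linarith
  · exfalso
    push Not at hb
    have hs : Tendsto (fun n => ∑ i, z n i) atTop atTop :=
      tendsto_atTop.2 fun C => (hb C).mono fun n hn => hn.le
    set s : ℕ → ℝ := fun n => ∑ i, z n i with hsdef
    have hev : ∀ᶠ n in atTop, 1 ≤ s n := hs.eventually_ge_atTop 1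
    set d : ℕ → Fin N → ℝ := fun n => (s n)⁻¹ • z n with hddef
    have hdmem : ∀ᶠ n in atTop, d n ∈ {z : Fin N → ℝ | (∀ i, 0 ≤ z i) ∧ ∑ i, z i ≤ 1} := by
      filter_upwards [hev] with n hn
      refine ⟨fun i => mul_nonneg (inv_nonneg.2 (by linarith)) (hz n i), ?_⟩
      simp only [hddef, Pi.smul_apply, smul_eq_mul, ← Finset.mul_sum]
      exact (inv_mul_cancel₀ (by simp only [hsdef] at hn ⊢; linarith)).le
    obtain ⟨a, ha, φ, hφ, hlim⟩ := tendsto_subseq_of_frequently_bounded (isBounded_simplex 1)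
      hdmem.frequently
    rw [(isClosed_simplex 1).closure_eq] at ha
    have hφt := hφ.tendsto_atTop
    have hsum : ∑ i, a i = 1 := by
      have h1 : Tendsto (fun n => ∑ i, d (φ n) i) atTop (𝓝 (∑ i, a i)) :=
        tendsto_finsetSum _ fun i _ => (tendsto_pi_nhds.1 hlim i)
      refine tendsto_nhds_unique h1 (tendsto_const_nhds.congr' ?_)
      filter_upwards [hφt.eventually hev] with n hn
      simp only [hddef, Pi.smul_apply, smul_eq_mul, ← Finset.mul_sum]
      exact (inv_mul_cancel₀ (by simp only [hsdef] at hn ⊢; linarith)).symm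
    have hA : ∀ j, A.mulVec a j = 0 := by
      intro j
      have h1 : Tendsto (fun n => A.mulVec (d (φ n)) j) atTop (𝓝 (A.mulVec a j)) :=
        ((continuous_mulVec_coord A j).tendsto a).comp hlim
      have hbd : ∀ n, |A.mulVec (z n) j| ≤ √(lsq A y 0) + |y j| := by
        intro n
        have h2 := hmin n 0 (fun _ => le_rfl)
        have h4 : 0 ≤ 1 / ((n : ℝ) + 1) * ∑ i, z n i :=
          mul_nonneg (hepos _).le (Finset.sum_nonneg fun i _ => hz _ i)
        simp only [Pi.zero_apply, Finset.sum_const_zero, mul_zero, add_zero] at h2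
        have h5 : (A.mulVec (z n) j - y j) ^ 2 ≤ lsq A y 0 := by
          refine le_trans ?_ (by linarith : lsq A y (z n) ≤ lsq A y 0)
          exact Finset.single_le_sum (f := fun j => (A.mulVec (z n) j - y j) ^ 2)
            (fun _ _ => sq_nonneg _) (Finset.mem_univ j)
        have h6 := Real.abs_le_sqrt h5
        have h7 := abs_sub_abs_le_abs_sub (A.mulVec (z n) j) (y j)
        linarith
      refine tendsto_nhds_unique h1 ?_
      have h3 : Tendsto (fun n => (s (φ n))⁻¹ * (√(lsq A y 0) + |y j|)) atTop (𝓝 0) := by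
        simpa using (tendsto_inv_atTop_zero.comp (hs.comp hφt)).mul_const (√(lsq A y 0) + |y j|)
      refine squeeze_zero_norm' ?_ h3
      filter_upwards [hφt.eventually hev] with n hn
      simp only [hddef, Matrix.mulVec_smul, Pi.smul_apply, smul_eq_mul, Real.norm_eq_abs, abs_mul]
      rw [abs_of_nonneg (inv_nonneg.2 (by linarith))]
      exact mul_le_mul_of_nonneg_left (hbd _) (inv_nonneg.2 (by linarith))
    have hev2 : ∀ᶠ n in atTop, ∀ i, 0 < a i → 0 < z (φ n) i := by
      rw [eventually_all]
      intro i
      by_cases hi : 0 < a i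
      · have := (tendsto_pi_nhds.1 hlim i).eventually (lt_mem_nhds hi)
        filter_upwards [this, hφt.eventually hev] with n hn hn2 _
        simp only [hddef, Function.comp, Pi.smul_apply, smul_eq_mul] at hn
        exact (pos_iff_pos_of_mul_pos hn).1 (inv_pos.2 (by linarith))
      · exact Eventually.of_forall fun n h => absurd h hi
    obtain ⟨n, hn⟩ := hev2.exists
    have hδ : ∃ δ : ℝ, 0 < δ ∧ ∀ i, 0 ≤ z (φ n) i - δ * a i := by
      have : ∀ᶠ δ in 𝓝[>] (0 : ℝ), ∀ i, 0 ≤ z (φ n) i - δ * a i := by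
        rw [eventually_all]
        intro i
        by_cases hi : 0 < a i
        · have hc : Tendsto (fun δ : ℝ => z (φ n) i - δ * a i) (𝓝[>] 0)
              (𝓝 (z (φ n) i - 0 * a i)) :=
            ((by fun_prop : Continuous (fun δ : ℝ => z (φ n) i - δ * a i)).tendsto 0).mono_left
              nhdsWithin_le_nhds
          rw [zero_mul, sub_zero] at hc
          exact (hc.eventually (lt_mem_nhds (hn i hi))).mono fun _ h => h.le
        · have : a i = 0 := le_antisymm (not_lt.1 hi) (ha.1 i)
          simp [this, hz]
      obtain ⟨δ, h1, h2⟩ := (this.and self_mem_nhdsWithin).exists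
      exact ⟨δ, h2, h1⟩
    obtain ⟨δ, hδ0, hδ1⟩ := hδ
    have h1 := hmin (φ n) (z (φ n) - δ • a) (fun i => by simpa using hδ1 i)
    have h2 : lsq A y (z (φ n) - δ • a) = lsq A y (z (φ n)) := by
      unfold lsq
      refine Finset.sum_congr rfl fun j _ => ?_
      simp [Matrix.mulVec_sub, Matrix.mulVec_smul, hA]
    have h3 : ∑ i, (z (φ n) - δ • a) i = ∑ i, z (φ n) i - δ := by
      simp [Finset.sum_sub_distrib, ← Finset.mul_sum, hsum]
    rw [h2, h3] at h1
    have := mul_pos (hepos (φ n)) hδ0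
    nlinarith

lemma exists_xi (L : ℕ) (hL : 2 ≤ L) :
    ∃ ξ : ℝ → ℝ, ∀ x : ℝ, 0 < x → HasDerivAt ξ (x ^ (L - 1))⁻¹ x := by
  obtain ⟨k, rfl⟩ := Nat.exists_eq_add_of_le hL
  rcases Nat.eq_zero_or_pos k with rfl | hk
  · exact ⟨Real.log, fun x hx => by simpa using Real.hasDerivAt_log hx.ne'⟩
  · refine ⟨fun x => -(x ^ k)⁻¹ / k, fun x hx => ?_⟩
    have h := (((hasDerivAt_pow k x).inv (pow_pos hx k).ne').neg).div_const (k : ℝ)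
    refine h.congr_deriv ?_
    have hk0 : (k : ℝ) ≠ 0 := by positivity
    obtain ⟨m, rfl⟩ := Nat.exists_eq_succ_of_ne_zero hk.ne'
    have e : 2 + m.succ - 1 = m + 2 := by omega
    rw [e]
    simp only [Nat.succ_eq_add_one, Nat.add_sub_cancel] at *
    field_simp
    ring

lemma xi_le {L : ℕ} {ξ : ℝ → ℝ} (hξ : ∀ x : ℝ, 0 < x → HasDerivAt ξ (x ^ (L - 1))⁻¹ x)
    {a x : ℝ} (ha : 0 < a) (hx : 0 < x) : ξ x - ξ a ≤ (a ^ (L - 1))⁻¹ * (x - a) := by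
  rcases lt_trichotomy a x with h | h | h
  · obtain ⟨c, hc, he⟩ := exists_hasDerivAt_eq_slope ξ (fun x => (x ^ (L - 1))⁻¹) h
      (fun t ht => (hξ t (ha.trans_le ht.1)).continuousAt.continuousWithinAt)
      (fun t ht => hξ t (ha.trans ht.1))
    rw [eq_div_iff (by linarith)] at he
    rw [← he]
    refine mul_le_mul_of_nonneg_right ?_ (by linarith)
    exact inv_anti₀ (by positivity) (pow_le_pow_left₀ ha.le hc.1.le _)
  · simp [h]
  · obtain ⟨c, hc, he⟩ := exists_hasDerivAt_eq_slope ξ (fun x => (x ^ (L - 1))⁻¹) h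
      (fun t ht => (hξ t (hx.trans_le ht.1)).continuousAt.continuousWithinAt)
      (fun t ht => hξ t (hx.trans ht.1))
    rw [eq_div_iff (by linarith)] at he
    have : (a ^ (L - 1))⁻¹ * (a - x) ≤ (c ^ (L - 1))⁻¹ * (a - x) := by
      refine mul_le_mul_of_nonneg_right ?_ (by linarith)
      exact inv_anti₀ (pow_pos (hx.trans hc.1) _) (pow_le_pow_left₀ (hx.trans hc.1).le hc.2.le _)
    linarith

def breg (L : ℕ) (ξ : ℝ → ℝ) (a x : ℝ) : ℝ := x ^ 2 / 2 - a ^ 2 / 2 - a ^ L * (ξ x - ξ a)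

lemma breg_ge {L : ℕ} (hL : 2 ≤ L) {ξ : ℝ → ℝ}
    (hξ : ∀ x : ℝ, 0 < x → HasDerivAt ξ (x ^ (L - 1))⁻¹ x)
    {a x : ℝ} (ha : 0 ≤ a) (hx : 0 < x) : (x - a) ^ 2 / 2 ≤ breg L ξ a x := by
  unfold breg
  rcases ha.eq_or_lt with rfl | ha
  · simp [show L ≠ 0 by omega]
  · have h := mul_le_mul_of_nonneg_left (xi_le hξ ha hx) (pow_pos ha L).le
    have e : a ^ L * ((a ^ (L - 1))⁻¹ * (x - a)) = a * (x - a) := by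
      obtain ⟨k, rfl⟩ := Nat.exists_eq_add_of_le hL
      have : 2 + k - 1 = k + 1 := by omega
      rw [this]
      field_simp
      ring
    rw [e] at h
    nlinarith

lemma breg_tendsto {L : ℕ} (hL : 2 ≤ L) {ξ : ℝ → ℝ}
    (hξ : ∀ x : ℝ, 0 < x → HasDerivAt ξ (x ^ (L - 1))⁻¹ x)
    {a : ℝ} (ha : 0 ≤ a) : Tendsto (breg L ξ a) (𝓝 a) (𝓝 0) := by
  rcases ha.eq_or_lt with rfl | ha
  · have : breg L ξ 0 = fun x => x ^ 2 / 2 := by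
      ext x; simp [breg, show L ≠ 0 by omega]
    rw [this]
    have h : Continuous (fun x : ℝ => x ^ 2 / 2) := by fun_prop
    simpa using h.tendsto 0
  · have h : ContinuousAt (breg L ξ a) a := by
      have := (hξ a ha).continuousAt
      unfold breg
      fun_prop
    simpa [ContinuousAt, breg] using h

section flow

variable {M N : ℕ} {L : ℕ} {A : Matrix (Fin M) (Fin N) ℝ} {y : Fin M → ℝ}
  {x : ℝ → Fin N → ℝ}

/-- the gradient -/
def grd (L : ℕ) (A : Matrix (Fin M) (Fin N) ℝ) (y : Fin M → ℝ) (v : Fin N → ℝ) (i : Fin N) : ℝ :=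
  Matrix.mulVec Aᵀ (A.mulVec (fun j => v j ^ L) - y) i

lemma continuous_grd (i : Fin N) : Continuous (fun v => grd L A y v i) := by
  unfold grd
  simp only [Matrix.mulVec, dotProduct, Pi.sub_apply]
  fun_prop

lemma flow_pos (hL : 2 ≤ L) (hflow : GradFlow A y L x) (h0 : ∀ i, 0 < x 0 i) :
    ∀ t, 0 ≤ t → ∀ i, 0 < x t i := by
  intro T hT i
  have hxc : Continuous (fun t => x (max t 0)) := by
    refine continuous_pi fun k => ?_
    refine continuous_iff_continuousAt.2 fun t => ?_
    exact ContinuousAt.comp (g := fun s => x s k) (f := fun t : ℝ => max t 0)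
      (hflow (max t 0) (le_max_right _ _) k).continuousAt (by fun_prop)
  set c : ℝ → ℝ := fun t => grd L A y (x (max t 0)) i * x (max t 0) i ^ (L - 2) with hc
  have hcc : Continuous c :=
    ((continuous_grd i).comp hxc).mul (((continuous_apply i).comp hxc).pow _)
  have hE : ∀ t, HasDerivAt (fun t => ∫ s in (0:ℝ)..t, c s) (c t) t := fun t =>
    intervalIntegral.integral_hasDerivAt_right (hcc.intervalIntegrable _ _)
      hcc.aestronglyMeasurable.stronglyMeasurableAtFilter hcc.continuousAt
  set E : ℝ → ℝ := fun t => ∫ s in (0:ℝ)..t, c s with hEdef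
  have hd : ∀ t, 0 ≤ t → HasDerivAt (fun s => x s i * Real.exp (E s)) 0 t := by
    intro t ht
    refine ((hflow t ht i).mul (hE t).exp).congr_deriv ?_
    simp only [hc, max_eq_left ht, grd]
    obtain ⟨k, rfl⟩ := Nat.exists_eq_add_of_le hL
    have e1 : 2 + k - 1 = k + 1 := by omega
    have e2 : 2 + k - 2 = k := by omega
    rw [e1, e2]
    ring
  have hconst := constant_of_has_deriv_right_zero (f := fun s => x s i * Real.exp (E s))
    (a := 0) (b := T) (fun t ht => (hd t ht.1).continuousAt.continuousWithinAt)
    (fun t ht => (hd t ht.1).hasDerivWithinAt) T ⟨hT, le_rfl⟩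
  have h1 : 0 < x T i * Real.exp (E T) := by
    rw [hconst]
    exact mul_pos (h0 i) (Real.exp_pos _)
  exact (pos_iff_pos_of_mul_pos h1).2 (Real.exp_pos _)

lemma grd_le (v z : Fin N → ℝ) :
    ∑ i, grd L A y v i * (z i - v i ^ L) ≤ (lsq A y z - lsq A y (fun j => v j ^ L)) / 2 := by
  set u : Fin N → ℝ := fun j => v j ^ L with hu
  have h1 : ∑ i, grd L A y v i * (z i - v i ^ L)
      = ∑ j, (A.mulVec u j - y j) * (A.mulVec z j - A.mulVec u j) := by
    change (Aᵀ *ᵥ (A *ᵥ u - y)) ⬝ᵥ (z - u) = (A *ᵥ u - y) ⬝ᵥ (A *ᵥ z - A *ᵥ u)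
    rw [← Matrix.mulVec_sub, Matrix.mulVec_transpose, Matrix.dotProduct_mulVec]
  rw [h1]
  unfold lsq
  rw [← Finset.sum_sub_distrib, Finset.sum_div]
  refine Finset.sum_le_sum fun j _ => ?_
  nlinarith [sq_nonneg (A.mulVec z j - A.mulVec u j)]

lemma hasDerivAt_lsq (hL : 2 ≤ L) (hflow : GradFlow A y L x) (t : ℝ) (ht : 0 ≤ t) :
    HasDerivAt (fun s => lsq A y (fun j => x s j ^ L))
      (-(2 * L * ∑ i, (grd L A y (x t) i * x t i ^ (L - 1)) ^ 2)) t := by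
  have hu : ∀ i, HasDerivAt (fun s => x s i ^ L)
      (L * x t i ^ (L - 1) * (-(grd L A y (x t) i * x t i ^ (L - 1)))) t :=
    fun i => (hflow t ht i).fun_pow L
  set w : Fin N → ℝ := fun i => L * x t i ^ (L - 1) * (-(grd L A y (x t) i * x t i ^ (L - 1)))
    with hw
  have hm : ∀ j, HasDerivAt (fun s => A.mulVec (fun k => x s k ^ L) j) (A.mulVec w j) t := by
    intro j
    simp only [Matrix.mulVec, dotProduct]
    exact HasDerivAt.fun_sum fun i _ => (hu i).const_mul (A j i)
  have h := HasDerivAt.fun_sum (u := Finset.univ) fun j _ => ((hm j).sub_const (y j)).fun_pow 2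
  refine h.congr_deriv ?_
  have h1 : (A *ᵥ (fun k => x t k ^ L) - y) ⬝ᵥ (A *ᵥ w) = (grd L A y (x t)) ⬝ᵥ w := by
    rw [Matrix.dotProduct_mulVec, ← Matrix.mulVec_transpose]
    rfl
  have h2 : ∑ j, ((2:ℕ):ℝ) * (A.mulVec (fun k => x t k ^ L) j - y j) ^ (2 - 1) * A.mulVec w j
      = 2 * ((A *ᵥ (fun k => x t k ^ L) - y) ⬝ᵥ (A *ᵥ w)) := by
    simp only [dotProduct, Finset.mul_sum, Pi.sub_apply]
    refine Finset.sum_congr rfl fun j _ => ?_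
    push_cast
    ring
  rw [h2, h1]
  simp only [dotProduct, hw, Finset.mul_sum, ← Finset.sum_neg_distrib]
  refine Finset.sum_congr rfl fun j _ => ?_
  ring

lemma lsq_antitone (hL : 2 ≤ L) (hflow : GradFlow A y L x) :
    AntitoneOn (fun s => lsq A y (fun j => x s j ^ L)) (Set.Ici 0) := by
  refine antitoneOn_of_hasDerivWithinAt_nonpos (convex_Ici 0)
    (fun t ht => (hasDerivAt_lsq hL hflow t ht).continuousAt.continuousWithinAt)
    (fun t ht => (hasDerivAt_lsq hL hflow t (interior_subset ht)).hasDerivWithinAt)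
    (fun t ht => ?_)
  have : 0 ≤ ∑ i, (grd L A y (x t) i * x t i ^ (L - 1)) ^ 2 :=
    Finset.sum_nonneg fun _ _ => sq_nonneg _
  have := mul_nonneg (by positivity : (0:ℝ) ≤ 2 * L) this
  linarith

lemma hasDerivAt_V (hL : 2 ≤ L) (hflow : GradFlow A y L x) {ξ : ℝ → ℝ}
    (hξ : ∀ x : ℝ, 0 < x → HasDerivAt ξ (x ^ (L - 1))⁻¹ x)
    (a : Fin N → ℝ) (t : ℝ) (ht : 0 ≤ t) (hpos : ∀ i, 0 < x t i) :
    HasDerivAt (fun s => ∑ i, breg L ξ (a i) (x s i))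
      (∑ i, grd L A y (x t) i * (a i ^ L - x t i ^ L)) t := by
  refine HasDerivAt.fun_sum fun i _ => ?_
  unfold breg
  have h1 := hflow t ht i
  have h2 := ((((h1.fun_pow 2).div_const 2).sub_const (a i ^ 2 / 2))).fun_sub
    ((((hξ _ (hpos i)).comp t h1).sub_const (ξ (a i))).const_mul (a i ^ L))
  refine h2.congr_deriv ?_
  change _ = (Aᵀ *ᵥ (A *ᵥ (fun j => x t j ^ L) - y)) i * _
  have hp := (hpos i).ne'
  generalize (Aᵀ *ᵥ (A *ᵥ (fun j => x t j ^ L) - y)) i = g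
  obtain ⟨k, rfl⟩ := Nat.exists_eq_add_of_le hL
  have e1 : 2 + k - 1 = k + 1 := by omega
  rw [e1]
  push_cast
  field_simp
  ring

lemma V_bound (hL : 2 ≤ L) (hflow : GradFlow A y L x) {ξ : ℝ → ℝ}
    (hξ : ∀ x : ℝ, 0 < x → HasDerivAt ξ (x ^ (L - 1))⁻¹ x)
    (a : Fin N → ℝ) (hpos : ∀ t, 0 ≤ t → ∀ i, 0 < x t i) (S T : ℝ) (hS : 0 ≤ S) (hST : S ≤ T) :
    ∑ i, breg L ξ (a i) (x T i) + (T - S) *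
      ((lsq A y (fun j => x T j ^ L) - lsq A y (fun j => a j ^ L)) / 2)
      ≤ ∑ i, breg L ξ (a i) (x S i) := by
  set q := (lsq A y (fun j => x T j ^ L) - lsq A y (fun j => a j ^ L)) / 2 with hq
  have hd : ∀ t, 0 ≤ t → HasDerivAt (fun s => ∑ i, breg L ξ (a i) (x s i) + s * q)
      (∑ i, grd L A y (x t) i * (a i ^ L - x t i ^ L) + 1 * q) t := fun t ht =>
    (hasDerivAt_V hL hflow hξ a t ht (hpos t ht)).add ((hasDerivAt_id t).mul_const q)
  have hanti : AntitoneOn (fun s => ∑ i, breg L ξ (a i) (x s i) + s * q) (Set.Icc S T) := by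
    refine antitoneOn_of_hasDerivWithinAt_nonpos (convex_Icc S T)
      (fun t ht => (hd t (hS.trans ht.1)).continuousAt.continuousWithinAt)
      (fun t ht => (hd t (hS.trans (interior_subset ht).1)).hasDerivWithinAt)
      (fun t ht => ?_)
    have ht' := interior_subset ht
    have h1 := grd_le (L := L) (A := A) (y := y) (x t) (fun i => a i ^ L)
    have h2 := lsq_antitone hL hflow (Set.mem_Ici.2 (hS.trans ht'.1))
      (Set.mem_Ici.2 (hS.trans hST)) ht'.2
    simp only at h1 h2
    linarith
  have := hanti ⟨le_rfl, hST⟩ ⟨hST, le_rfl⟩ hST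
  simp only at this
  linarith

end flow

theorem stmt0 {M N : ℕ} (L : ℕ) (hL : 2 ≤ L)
    (A : Matrix (Fin M) (Fin N) ℝ) (y : Fin M → ℝ)
    (x : ℝ → Fin N → ℝ) (x0 : Fin N → ℝ) (hx0 : ∀ i, 0 < x0 i)
    (hinit : x 0 = x0)
    (hflow : GradFlow A y L x) :
    ∃ xinf : Fin N → ℝ,
      Tendsto (fun t => fun i => x t i ^ L) atTop (𝓝 xinf) ∧
      (∀ i, 0 ≤ xinf i) ∧ xinf ∈ nnlsSet A y := by
  have hL0 : L ≠ 0 := by omega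
  have hpos := flow_pos hL hflow (by rw [hinit]; exact hx0)
  obtain ⟨ξ, hξ⟩ := exists_xi L hL
  obtain ⟨z, hz, hzmin⟩ := exists_nnls A y
  have hroot : ∀ i, ∃ b : ℝ, 0 ≤ b ∧ b ^ L = z i := fun i =>
    ⟨z i ^ ((L : ℝ)⁻¹), Real.rpow_nonneg (hz i) _, Real.rpow_inv_natCast_pow (hz i) hL0⟩
  choose b hb hbz using hroot
  have hbz' : (fun j => b j ^ L) = z := funext hbz
  have hupos : ∀ t, 0 ≤ t → ∀ i, 0 ≤ x t i ^ L := fun t ht i => (pow_pos (hpos t ht i) L).le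
  have hVge : ∀ a : Fin N → ℝ, (∀ i, 0 ≤ a i) → ∀ t, 0 ≤ t → ∀ i,
      (x t i - a i) ^ 2 / 2 ≤ ∑ i, breg L ξ (a i) (x t i) := by
    intro a ha t ht i
    refine (breg_ge hL hξ (ha i) (hpos t ht i)).trans ?_
    refine Finset.single_le_sum (f := fun i => breg L ξ (a i) (x t i)) (fun k _ => ?_)
      (Finset.mem_univ i)
    exact (by positivity : (0:ℝ) ≤ (x t k - a k) ^ 2 / 2).trans
      (breg_ge hL hξ (ha k) (hpos t ht k))
  have hV0 : ∀ a : Fin N → ℝ, (∀ i, 0 ≤ a i) → ∀ t, 0 ≤ t →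
      0 ≤ ∑ i, breg L ξ (a i) (x t i) := fun a ha t ht => Finset.sum_nonneg fun k _ =>
    (by positivity : (0:ℝ) ≤ (x t k - a k) ^ 2 / 2).trans
      (breg_ge hL hξ (ha k) (hpos t ht k))
  set C := ∑ i, breg L ξ (b i) (x 0 i) with hC
  have hCbound : ∀ t, 0 ≤ t → ∑ i, breg L ξ (b i) (x t i) + t *
      ((lsq A y (fun j => x t j ^ L) - lsq A y z) / 2) ≤ C := by
    intro t ht
    have := V_bound hL hflow hξ b hpos 0 t le_rfl ht
    rwa [sub_zero, hbz'] at this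
  -- boundedness
  have hbdd : ∀ n : ℕ, x n ∈ Metric.closedBall b √(2 * C) := by
    intro n
    have hn : (0:ℝ) ≤ n := n.cast_nonneg
    rw [Metric.mem_closedBall, dist_pi_le_iff (Real.sqrt_nonneg _)]
    intro i
    rw [Real.dist_eq]
    refine Real.abs_le_sqrt ?_
    have h1 := hVge b hb n hn i
    have h2 := hCbound n hn
    have h3 := mul_nonneg hn (div_nonneg (sub_nonneg.2 (hzmin _ (hupos n hn))) zero_le_two)
    linarith
  obtain ⟨a, -, φ, hφ, hlim⟩ := tendsto_subseq_of_bounded Metric.isBounded_closedBall hbdd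
  have hφt : Tendsto (fun n => (φ n : ℝ)) atTop atTop :=
    tendsto_natCast_atTop_atTop.comp hφ.tendsto_atTop
  have hlimi : ∀ i, Tendsto (fun n => x (φ n) i) atTop (𝓝 (a i)) := fun i =>
    tendsto_pi_nhds.1 hlim i
  have ha : ∀ i, 0 ≤ a i := fun i =>
    ge_of_tendsto' (hlimi i) fun n => (hpos _ (Nat.cast_nonneg _) i).le
  -- the limit point is optimal
  have hlsqa : lsq A y (fun j => a j ^ L) ≤ lsq A y z := by
    have h1 : Tendsto (fun n => lsq A y (fun j => x (φ n) j ^ L)) atTop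
        (𝓝 (lsq A y (fun j => a j ^ L))) :=
      ((continuous_lsq A y).tendsto _).comp (tendsto_pi_nhds.2 fun i => (hlimi i).pow L)
    have h2 : Tendsto (fun n => lsq A y z + 2 * C / (φ n : ℝ)) atTop (𝓝 (lsq A y z + 0)) :=
      tendsto_const_nhds.add (hφt.const_div_atTop (2 * C))
    rw [add_zero] at h2
    refine le_of_tendsto_of_tendsto h1 h2 ?_
    filter_upwards [hφt.eventually_gt_atTop 0] with n hn
    have h3 := hCbound _ hn.le
    have h4 := hV0 b hb _ hn.le
    have h5 : lsq A y (fun j => x (φ n) j ^ L) - lsq A y z ≤ 2 * C / (φ n : ℝ) := by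
      rw [le_div_iff₀ hn]
      linarith
    linarith
  have hopt : ∀ w : Fin N → ℝ, (∀ i, 0 ≤ w i) → lsq A y (fun j => a j ^ L) ≤ lsq A y w :=
    fun w hw => hlsqa.trans (hzmin w hw)
  -- convergence of the Bregman divergence
  have hVsub : Tendsto (fun n => ∑ i, breg L ξ (a i) (x (φ n) i)) atTop (𝓝 0) := by
    have := tendsto_finsetSum (Finset.univ : Finset (Fin N))
      fun i _ => (breg_tendsto hL hξ (ha i)).comp (hlimi i)
    simpa using this
  have hVmono : ∀ S T, 0 ≤ S → S ≤ T →
      ∑ i, breg L ξ (a i) (x T i) ≤ ∑ i, breg L ξ (a i) (x S i) := by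
    intro S T hS hST
    have h1 := V_bound hL hflow hξ a hpos S T hS hST
    have h2 := mul_nonneg (sub_nonneg.2 hST) (div_nonneg
      (sub_nonneg.2 (hopt _ (hupos T (hS.trans hST)))) zero_le_two)
    linarith
  have hxlim : ∀ i, Tendsto (fun t => x t i) atTop (𝓝 (a i)) := by
    intro i
    rw [Metric.tendsto_atTop]
    intro ε hε
    obtain ⟨n, hn⟩ := (hVsub.eventually (gt_mem_nhds (by positivity : 0 < ε ^ 2 / 2))).exists
    refine ⟨φ n, fun t ht => ?_⟩
    have hφ0 : (0:ℝ) ≤ φ n := Nat.cast_nonneg _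
    have h1 := hVmono _ t hφ0 ht
    have h2 := hVge a ha t (hφ0.trans ht) i
    rw [Real.dist_eq]
    exact abs_lt_of_sq_lt_sq (by linarith) hε.le
  refine ⟨fun i => a i ^ L, tendsto_pi_nhds.2 fun i => (hxlim i).pow L,
    fun i => pow_nonneg (ha i) L, fun i => pow_nonneg (ha i) L, fun w hw => hopt w hw⟩
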